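/- Under hypothesis (1.0), assume μ(0,D) < ∞ and δ := sup_{x∈(0,D)} ν(0,x)·μ(x,D) < ∞. Set π = μ/μ(0,D), f̄ = f − π(f), φ(x) = ν(0,x), f₁ = √φ, fₙ = f̄_{n−1}·II(f̄_{n−1}) for n ≥ 2, and ηₙ = sup_{x∈(0,D)} I(f̄ₙ)(x) = sup_{x∈(0,D)} (∫ₓ^D f̄ₙ dμ)/(∫ₓ^D f̄_{n−1} dμ). Then the sequence (ηₙ) is monotone: ηₙ ≤ η_{n−1} for every n ≥ 2. -/

import Mathlib

/-!
Write `T_n(x) = ∫_x^D f̄_n dμ`. Since `(II)` undoes two derivatives, `f_{n+1}' = e^{-C} T_n`, so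
`I(f̄_n) = e^{-C} T_n / f_n' = f_{n+1}' / f_n'`, and for a later iterate
`I(f̄_{n+1}) = T_{n+1} / T_n`, which is the ratio representation. If `η = η_n` is finite, then
`f_{n+1}' ≤ η f_n'`, so `f_{n+1} - η f_n` is decreasing; a decreasing function minus its mean has
nonpositive tail integrals (`tailInt_nonpos`), hence `T_{n+1} ≤ η T_n`, and dividing by `T_n > 0`
gives `η_{n+1} ≤ η_n` (`tailN_succ_le`, `etaNN_succ_le`). Positivity of `T_n` is the strict form of
the same fact for the increasing `f_n` (`tailInt_pos`).

Two points need care.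

* Integrability. With `φ = ν(0, ·)`, the hypothesis `δ < ∞` gives the weak-type bound
  `μ{φ > t} ≤ δ/t`, hence `∫_s^D √φ dμ ≤ 2δ/√φ(s)` (`lintegral_sqrt_phi_le`). Consequently
  `0 ≤ f_n ≤ K√φ` implies `T_n ≤ K'/√φ`, that is `f_{n+1}' ≤ 2K'(√φ)'`, and so
  `f_{n+1} ≤ 2K'√φ`: the bound propagates, and every iterate lies in `L¹(μ)` (`regular`).
* Zeros of `f̄_n`. The product `f̄_n · II(f̄_n)` takes the value `0` where `f̄_n` vanishes, because
  of the convention `y / 0 = 0`, so the formal iterate differs from the bare double integral `Phi`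
  at finitely many points. These points are `μ`-null, and they do not change the supremum defining
  `η` because the relevant ratio is positive and continuous (`etaNN_eq`).
-/

open MeasureTheory Set Filter Topology ENNReal

noncomputable section

/-- The open interval `(0, D)` in `ℝ`, where `D : ℝ≥0∞` may be infinite. -/
def ooI (D : ℝ≥0∞) : Set ℝ := {x : ℝ | 0 < x ∧ ENNReal.ofReal x < D}

/-- The interval `[0, D)` in `ℝ`. -/
def coI (D : ℝ≥0∞) : Set ℝ := {x : ℝ | 0 ≤ x ∧ ENNReal.ofReal x < D}

/-- The interval `[0, D]` in `ℝ` (conventionally `[0, ∞)` when `D = ∞`). -/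
def ccI (D : ℝ≥0∞) : Set ℝ := {x : ℝ | 0 ≤ x ∧ ENNReal.ofReal x ≤ D}

/-- `C(x) = ∫_0^x b(u)/a(u) du`. -/
def Cf (a b : ℝ → ℝ) (x : ℝ) : ℝ := ∫ u in Set.Ioo 0 x, b u / a u

/-- The measure `μ(dx) = (e^{C(x)}/a(x)) dx` on `(0, D)`. -/
def muM (a b : ℝ → ℝ) (D : ℝ≥0∞) : Measure ℝ :=
  (volume.restrict (ooI D)).withDensity fun x => ENNReal.ofReal (Real.exp (Cf a b x) / a x)

/-- The measure `ν(dx) = e^{-C(x)} dx` on `(0, D)`. -/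
def nuM (a b : ℝ → ℝ) (D : ℝ≥0∞) : Measure ℝ :=
  (volume.restrict (ooI D)).withDensity fun x => ENNReal.ofReal (Real.exp (-Cf a b x))

/-- Hypothesis (1.0): `a`, `b` Borel measurable, `a > 0` on `(0,D)`, and `b/a`, `e^C/a`
locally integrable on `[0, D]`. -/
def Hyp (a b : ℝ → ℝ) (D : ℝ≥0∞) : Prop :=
  Measurable a ∧ Measurable b ∧ (∀ x ∈ ooI D, 0 < a x) ∧
    ∀ p : ℝ, 0 ≤ p → ENNReal.ofReal p ≤ D →
      IntegrableOn (fun u => b u / a u) (Set.Icc 0 p) ∧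
      IntegrableOn (fun u => Real.exp (Cf a b u) / a u) (Set.Icc 0 p)

/-- `f ∈ C¹(0,D) ∩ C[0,D]`. -/
def C1C (D : ℝ≥0∞) (f : ℝ → ℝ) : Prop :=
  ContinuousOn f (ccI D) ∧ (∀ x ∈ ooI D, DifferentiableAt ℝ f x) ∧
    ContinuousOn (deriv f) (ooI D)

/-- The Dirichlet form `D(f) = ∫_0^D e^{C} f'^2 dx`. -/
def Dform (a b : ℝ → ℝ) (D : ℝ≥0∞) (f : ℝ → ℝ) : ℝ≥0∞ :=
  ∫⁻ x in ooI D, ENNReal.ofReal (Real.exp (Cf a b x) * deriv f x ^ 2)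

/-- `μ(f²)`. -/
def muL2 (a b : ℝ → ℝ) (D : ℝ≥0∞) (f : ℝ → ℝ) : ℝ≥0∞ :=
  ∫⁻ x, ENNReal.ofReal (f x ^ 2) ∂(muM a b D)

/-- The ND (Neumann at `0`, Dirichlet at `D`) principal eigenvalue `λ₀`, defined with
compactly supported test functions. -/
def lam0 (a b : ℝ → ℝ) (D : ℝ≥0∞) : ℝ≥0∞ :=
  sInf {r | ∃ f : ℝ → ℝ, C1C D f ∧
    (∃ p : ℝ, 0 ≤ p ∧ ENNReal.ofReal p < D ∧ ∀ x, p < x → f x = 0) ∧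
    (D ≠ ∞ → f D.toReal = 0) ∧ muL2 a b D f = 1 ∧ r = Dform a b D f}

/-- The DN constant `δ = sup_{x∈(0,D)} ν(0,x) μ(x,D)`. -/
def deltaDN (a b : ℝ → ℝ) (D : ℝ≥0∞) : ℝ≥0∞ :=
  ⨆ x ∈ ooI D, nuM a b D (Set.Ioo 0 x) * muM a b D (Set.Ioi x)

/-- `π(f) = μ(f)/μ(0,D)`. -/
def piMean (a b : ℝ → ℝ) (D : ℝ≥0∞) (f : ℝ → ℝ) : ℝ :=
  (∫ x, f x ∂(muM a b D)) / (muM a b D Set.univ).toReal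

/-- `f̄ = f - π(f)`. -/
def barF (a b : ℝ → ℝ) (D : ℝ≥0∞) (f : ℝ → ℝ) : ℝ → ℝ :=
  fun x => f x - piMean a b D f

/-- `∫_x^D g dμ` (a signed integral). -/
def tailInt (a b : ℝ → ℝ) (D : ℝ≥0∞) (g : ℝ → ℝ) (x : ℝ) : ℝ :=
  ∫ u in Set.Ioi x, g u ∂(muM a b D)

/-- The (real-valued, signed) DN single-integral operator
`I(g)(x) = (e^{-C(x)}/g'(x)) ∫_x^D g dμ`. -/
def opIsigned (a b : ℝ → ℝ) (D : ℝ≥0∞) (g : ℝ → ℝ) (x : ℝ) : ℝ :=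
  Real.exp (-Cf a b x) / deriv g x * tailInt a b D g x

/-- The (real-valued, signed) DN double-integral operator
`II(g)(x) = (1/g(x)) ∫_0^x ν(ds) ∫_s^D g dμ`. -/
def opIIsigned (a b : ℝ → ℝ) (D : ℝ≥0∞) (g : ℝ → ℝ) (x : ℝ) : ℝ :=
  (∫ s in Set.Ioo 0 x, tailInt a b D g s ∂(nuM a b D)) / g x

/-- The NN approximating sequence `f₁ = √(ν(0,·))`, `fₙ = f̄_{n-1} · II(f̄_{n-1})`
(indexed so that `fseqNN n` is `f_{n+1}`). -/
def fseqNN (a b : ℝ → ℝ) (D : ℝ≥0∞) : ℕ → ℝ → ℝ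
  | 0 => fun x => Real.sqrt ((nuM a b D (Set.Ioo 0 x)).toReal)
  | n + 1 => fun x =>
      barF a b D (fseqNN a b D n) x *
        opIIsigned a b D (barF a b D (fseqNN a b D n)) x

/-- `ηₙ = sup_{x∈(0,D)} I(f̄ₙ)(x)` (indexed so that `etaNN n` is `η_{n+1}`),
valued in `EReal`. -/
def etaNN (a b : ℝ → ℝ) (D : ℝ≥0∞) (n : ℕ) : EReal :=
  ⨆ x ∈ ooI D, ((opIsigned a b D (barF a b D (fseqNN a b D n)) x : ℝ) : EReal)

/-! ### The interval and the measures -/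

lemma isOpen_ooI (D : ℝ≥0∞) : IsOpen (ooI D) :=
  (isOpen_lt continuous_const continuous_id).inter
    (isOpen_lt ENNReal.continuous_ofReal continuous_const)

lemma ooI_of_le {D : ℝ≥0∞} {x y : ℝ} (hx : x ∈ ooI D) (hy : 0 < y) (hyx : y ≤ x) : y ∈ ooI D :=
  ⟨hy, (ENNReal.ofReal_le_ofReal hyx).trans_lt hx.2⟩

lemma convex_ooI (D : ℝ≥0∞) : Convex ℝ (ooI D) := by
  apply Set.OrdConnected.convex
  exact ⟨fun x hx y hy z hz => ooI_of_le hy (hx.1.trans_le hz.1) hz.2⟩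

lemma exists_gt_ooI {D : ℝ≥0∞} {x : ℝ} (hx : x ∈ ooI D) : ∃ p ∈ ooI D, x < p := by
  obtain ⟨r, hr, hs⟩ := Metric.isOpen_iff.1 (isOpen_ooI D) x hx
  refine ⟨x + r / 2, hs ?_, by linarith⟩
  rw [Metric.mem_ball, Real.dist_eq, add_sub_cancel_left, abs_of_pos (by linarith)]
  linarith

lemma ooI_nonempty {D : ℝ≥0∞} (hD : 0 < D) : (ooI D).Nonempty := by
  obtain ⟨q, hq, hqD⟩ := ENNReal.lt_iff_exists_nnreal_btwn.1 hD
  exact ⟨q, by exact_mod_cast hq, by simpa using hqD⟩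

lemma continuousOn_Cf_Icc {a b : ℝ → ℝ} {D : ℝ≥0∞} (hyp : Hyp a b D) {p : ℝ} (hp : p ∈ ooI D) :
    ContinuousOn (Cf a b) (Icc 0 p) := by
  have h := intervalIntegral.continuousOn_primitive (hyp.2.2.2 p hp.1.le hp.2.le).1
  refine h.congr fun x _ => ?_
  simp only [Cf, integral_Ioc_eq_integral_Ioo]

/-- A function continuous on every `[0, p]` with `p ∈ (0, D)` is continuous on `(0, D)`. -/
lemma continuousOn_ooI_of_Icc {D : ℝ≥0∞} {f : ℝ → ℝ}
    (h : ∀ p ∈ ooI D, ContinuousOn f (Icc 0 p)) : ContinuousOn f (ooI D) := by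
  intro x hx
  obtain ⟨p, hp, hxp⟩ := exists_gt_ooI hx
  exact ((h p hp).continuousAt (Icc_mem_nhds hx.1 hxp)).continuousWithinAt

lemma continuousOn_Cf {a b : ℝ → ℝ} {D : ℝ≥0∞} (hyp : Hyp a b D) :
    ContinuousOn (Cf a b) (ooI D) :=
  continuousOn_ooI_of_Icc fun _ hp => continuousOn_Cf_Icc hyp hp

instance nullSingletonClass_muM (a b : ℝ → ℝ) (D : ℝ≥0∞) : NullSingletonClass (muM a b D) := by
  unfold muM; infer_instance

lemma ae_mem_ooI (a b : ℝ → ℝ) (D : ℝ≥0∞) : ∀ᵐ x ∂(muM a b D), x ∈ ooI D :=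
  (withDensity_absolutelyContinuous _ _).ae_le (ae_restrict_mem (isOpen_ooI D).measurableSet)

lemma muM_Ioo_pos {a b : ℝ → ℝ} {D : ℝ≥0∞} (hyp : Hyp a b D) {c d : ℝ} (hcd : c < d)
    (h : Ioo c d ⊆ ooI D) : 0 < muM a b D (Ioo c d) := by
  rw [muM, withDensity_apply _ measurableSet_Ioo, Measure.restrict_restrict measurableSet_Ioo,
    inter_eq_left.2 h, pos_iff_ne_zero]
  intro h0
  have hm : AEMeasurable (fun x => ENNReal.ofReal (Real.exp (Cf a b x) / a x))
      (volume.restrict (Ioo c d)) := by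
    have h1 : AEMeasurable (Cf a b) (volume.restrict (Ioo c d)) :=
      ((continuousOn_Cf hyp).mono h).aemeasurable measurableSet_Ioo
    exact (h1.exp.div hyp.1.aemeasurable).ennreal_ofReal
  rw [lintegral_eq_zero_iff' hm] at h0
  have h2 : ∀ᵐ x ∂(volume.restrict (Ioo c d)), False := by
    filter_upwards [h0, ae_restrict_mem measurableSet_Ioo] with x hx hxm
    have : 0 < Real.exp (Cf a b x) / a x := div_pos (Real.exp_pos _) (hyp.2.2.1 x (h hxm))
    simp only [Pi.zero_apply, ENNReal.ofReal_eq_zero] at hx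
    linarith
  rw [ae_iff] at h2
  simp at h2
  linarith

lemma muM_Ioi_pos {a b : ℝ → ℝ} {D : ℝ≥0∞} (hyp : Hyp a b D) {x : ℝ} (hx : x ∈ ooI D) :
    0 < muM a b D (Ioi x) := by
  obtain ⟨p, hp, hxp⟩ := exists_gt_ooI hx
  exact (muM_Ioo_pos hyp hxp fun y hy => ooI_of_le hp (hx.1.trans hy.1) hy.2.le).trans_le
    (measure_mono Ioo_subset_Ioi_self)

/-- On `(0, D)`, integrals against `ν` over `(0, x)` are ordinary interval integrals. -/
lemma nuM_integral_eq {a b : ℝ → ℝ} {D : ℝ≥0∞} (hyp : Hyp a b D) (g : ℝ → ℝ) {p : ℝ}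
    (hp : p ∈ ooI D) {x : ℝ} (hx : x ∈ Icc 0 p) :
    ∫ s in Ioo 0 x, g s ∂(nuM a b D) = ∫ s in (0 : ℝ)..x, Real.exp (-Cf a b s) * g s := by
  have hsub : Ioo 0 x ⊆ ooI D := fun y hy => ooI_of_le hp hy.1 (hy.2.le.trans hx.2)
  have hr : (volume.restrict (ooI D)).restrict (Ioo 0 x) = volume.restrict (Ioo 0 x) := by
    rw [Measure.restrict_restrict measurableSet_Ioo, inter_eq_left.2 hsub]
  rw [nuM, setIntegral_withDensity_eq_setIntegral_toReal_smul₀ _ _ _ measurableSet_Ioo, hr,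
    intervalIntegral.integral_of_le hx.1, integral_Ioc_eq_integral_Ioo]
  · simp [ENNReal.toReal_ofReal (Real.exp_pos _).le]
  · rw [hr]
    exact ((((continuousOn_Cf hyp).mono hsub).aemeasurable
      measurableSet_Ioo).neg.exp).ennreal_ofReal
  · simp

lemma continuousOn_weight {a b : ℝ → ℝ} {D : ℝ≥0∞} (hyp : Hyp a b D) {p : ℝ} (hp : p ∈ ooI D) :
    ContinuousOn (fun s => Real.exp (-Cf a b s)) (Icc 0 p) :=
  (continuousOn_Cf_Icc hyp hp).neg.rexp

lemma continuousOn_weight' {a b : ℝ → ℝ} {D : ℝ≥0∞} (hyp : Hyp a b D) :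
    ContinuousOn (fun s => Real.exp (-Cf a b s)) (ooI D) :=
  (continuousOn_Cf hyp).neg.rexp

lemma continuousOn_nuM_integral {a b : ℝ → ℝ} {D : ℝ≥0∞} (hyp : Hyp a b D) {g : ℝ → ℝ}
    (hg : Continuous g) {p : ℝ} (hp : p ∈ ooI D) :
    ContinuousOn (fun x => ∫ s in Ioo 0 x, g s ∂(nuM a b D)) (Icc 0 p) := by
  have h : ContinuousOn (fun x => ∫ s in (0 : ℝ)..x, Real.exp (-Cf a b s) * g s) (Icc 0 p) := by
    have := intervalIntegral.continuousOn_primitive_interval (a := 0) (b := p) (μ := volume)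
      (f := fun s => Real.exp (-Cf a b s) * g s) (by
        rw [uIcc_of_le hp.1.le]
        exact ((continuousOn_weight hyp hp).mul hg.continuousOn).integrableOn_Icc)
    rwa [uIcc_of_le hp.1.le] at this
  exact h.congr fun x hx => nuM_integral_eq hyp g hp hx

lemma hasDerivAt_nuM_integral {a b : ℝ → ℝ} {D : ℝ≥0∞} (hyp : Hyp a b D) {g : ℝ → ℝ}
    (hg : Continuous g) {x : ℝ} (hx : x ∈ ooI D) :
    HasDerivAt (fun x => ∫ s in Ioo 0 x, g s ∂(nuM a b D)) (Real.exp (-Cf a b x) * g x) x := by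
  obtain ⟨p, hp, hxp⟩ := exists_gt_ooI hx
  have hc := (continuousOn_weight hyp hp).mul hg.continuousOn
  have h : HasDerivAt (fun x => ∫ s in (0 : ℝ)..x, Real.exp (-Cf a b s) * g s)
      (Real.exp (-Cf a b x) * g x) x := by
    refine intervalIntegral.integral_hasDerivAt_right ?_ ?_ ?_
    · refine ContinuousOn.intervalIntegrable ?_
      rw [uIcc_of_le hx.1.le]
      exact hc.mono (Icc_subset_Icc_right hxp.le)
    · exact ((continuousOn_weight' hyp).mul hg.continuousOn).stronglyMeasurableAtFilter
        (isOpen_ooI D) x hx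
    · exact hc.continuousAt (Icc_mem_nhds hx.1 hxp)
  refine h.congr_of_eventuallyEq ?_
  filter_upwards [Icc_mem_nhds hx.1 hxp] with y hy using nuM_integral_eq hyp g hp hy

/-- The scale function `φ(x) = ν(0, x)`, as a real number. -/
def phi (a b : ℝ → ℝ) (D : ℝ≥0∞) (x : ℝ) : ℝ := (nuM a b D (Ioo 0 x)).toReal

lemma phi_eq (a b : ℝ → ℝ) (D : ℝ≥0∞) (x : ℝ) :
    phi a b D x = ∫ _ in Ioo 0 x, (1 : ℝ) ∂(nuM a b D) := by
  simp [phi, Measure.real]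

lemma hasDerivAt_phi {a b : ℝ → ℝ} {D : ℝ≥0∞} (hyp : Hyp a b D) {x : ℝ} (hx : x ∈ ooI D) :
    HasDerivAt (phi a b D) (Real.exp (-Cf a b x)) x := by
  have := hasDerivAt_nuM_integral hyp (g := fun _ => 1) continuous_const hx
  rw [mul_one] at this
  exact this.congr_of_eventuallyEq (Eventually.of_forall fun y => phi_eq a b D y)

lemma continuousOn_phi_Icc {a b : ℝ → ℝ} {D : ℝ≥0∞} (hyp : Hyp a b D) {p : ℝ} (hp : p ∈ ooI D) :
    ContinuousOn (phi a b D) (Icc 0 p) :=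
  (continuousOn_nuM_integral hyp (g := fun _ => 1) continuous_const hp).congr
    fun x _ => phi_eq a b D x

lemma continuousOn_phi {a b : ℝ → ℝ} {D : ℝ≥0∞} (hyp : Hyp a b D) :
    ContinuousOn (phi a b D) (ooI D) :=
  continuousOn_ooI_of_Icc fun _ hp => continuousOn_phi_Icc hyp hp

lemma phi_zero (a b : ℝ → ℝ) (D : ℝ≥0∞) : phi a b D 0 = 0 := by simp [phi]

lemma phi_pos {a b : ℝ → ℝ} {D : ℝ≥0∞} (hyp : Hyp a b D) {x : ℝ} (hx : x ∈ ooI D) :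
    0 < phi a b D x := by
  rw [phi_eq, nuM_integral_eq hyp _ hx ⟨hx.1.le, le_rfl⟩]
  refine intervalIntegral.intervalIntegral_pos_of_pos_on ?_ (fun y _ => by positivity) hx.1
  refine ContinuousOn.intervalIntegrable ?_
  rw [uIcc_of_le hx.1.le]
  exact (continuousOn_weight hyp hx).mul continuousOn_const

lemma ofReal_phi {a b : ℝ → ℝ} {D : ℝ≥0∞} (hyp : Hyp a b D) {x : ℝ} (hx : x ∈ ooI D) :
    ENNReal.ofReal (phi a b D x) = nuM a b D (Ioo 0 x) := by
  refine ENNReal.ofReal_toReal fun h => ?_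
  have := phi_pos hyp hx
  simp [phi, h] at this

lemma phi_mono {a b : ℝ → ℝ} {D : ℝ≥0∞} (hyp : Hyp a b D) {x y : ℝ} (hy : y ∈ ooI D)
    (hxy : x ≤ y) : phi a b D x ≤ phi a b D y := by
  refine ENNReal.toReal_mono ?_ (measure_mono (Ioo_subset_Ioo_right hxy))
  rw [← ofReal_phi hyp hy]
  exact ENNReal.ofReal_ne_top

/-! ### Weak-type estimate and integrability of `√φ` -/

lemma muM_Ioi_le {a b : ℝ → ℝ} {D : ℝ≥0∞} (hyp : Hyp a b D) (hdelta : deltaDN a b D < ∞)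
    {x : ℝ} (hx : x ∈ ooI D) :
    muM a b D (Ioi x) ≤ ENNReal.ofReal ((deltaDN a b D).toReal / phi a b D x) := by
  have hp := phi_pos hyp hx
  rw [ENNReal.ofReal_div_of_pos hp, ENNReal.ofReal_toReal hdelta.ne, ofReal_phi hyp hx,
    ENNReal.le_div_iff_mul_le, mul_comm]
  · exact le_iSup₂ (f := fun x (_ : x ∈ ooI D) => nuM a b D (Ioo 0 x) * muM a b D (Ioi x)) x hx
  · left; rw [← ofReal_phi hyp hx]; simpa using hp
  · left; rw [← ofReal_phi hyp hx]; exact ENNReal.ofReal_ne_top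

/-- Weak-type bound: a superlevel set of `φ` is a right tail of `(0, D)`, so its `μ`-mass is
controlled by `δ`. -/
lemma muM_phi_gt_le {a b : ℝ → ℝ} {D : ℝ≥0∞} (hyp : Hyp a b D) (hdelta : deltaDN a b D < ∞)
    {s : ℝ} (hs : s ∈ ooI D) {t : ℝ} (ht : phi a b D s ≤ t) :
    muM a b D {x | t < phi a b D x} ≤ ENNReal.ofReal ((deltaDN a b D).toReal / t) := by
  by_cases hne : ∃ y ∈ ooI D, t < phi a b D y
  · obtain ⟨y, hy, hty⟩ := hne
    have hsy : s ≤ y := by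
      by_contra! h
      linarith [phi_mono hyp hs h.le]
    obtain ⟨z, hz, hzt⟩ := intermediate_value_Icc hsy
      ((continuousOn_phi_Icc hyp hy).mono (Icc_subset_Icc_left hs.1.le)) ⟨ht, hty.le⟩
    have hzD : z ∈ ooI D := ooI_of_le hy (hs.1.trans_le hz.1) hz.2
    have := muM_Ioi_le hyp hdelta hzD
    rw [hzt] at this
    refine le_trans (measure_mono_ae ?_) this
    filter_upwards [ae_mem_ooI a b D] with x _ hxt
    by_contra hxz
    have h1 := phi_mono hyp hzD (not_lt.1 hxz)
    have h2 : t < phi a b D x := hxt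
    linarith
  · push Not at hne
    have : muM a b D {x | t < phi a b D x} = 0 := by
      rw [← nonpos_iff_eq_zero, ← measure_empty (μ := muM a b D)]
      refine measure_mono_ae ?_
      filter_upwards [ae_mem_ooI a b D] with x hx hxt
      exact absurd hxt (not_lt.2 (hne x hx))
    rw [this]; exact zero_le

lemma aemeasurable_of_continuousOn {a b : ℝ → ℝ} {D : ℝ≥0∞} {f : ℝ → ℝ}
    (hf : ContinuousOn f (ooI D)) : AEMeasurable f (muM a b D) :=
  (hf.aemeasurable (isOpen_ooI D).measurableSet).mono_ac (withDensity_absolutelyContinuous _ _)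

/-- The tail estimate `∫_s^D √φ dμ ≤ 2δ / √φ(s)`: by the layer-cake formula, the distribution
function of `√φ` on `(s, D)` is at most `δ/φ(s)` below the level `√φ(s)` and at most `δ/τ²` above
it. -/
lemma lintegral_sqrt_phi_le {a b : ℝ → ℝ} {D : ℝ≥0∞} (hyp : Hyp a b D)
    (hdelta : deltaDN a b D < ∞) {s : ℝ} (hs : s ∈ ooI D) :
    ∫⁻ x in Ioi s, ENNReal.ofReal (√(phi a b D x)) ∂(muM a b D) ≤
      ENNReal.ofReal (2 * (deltaDN a b D).toReal / √(phi a b D s)) := by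
  set δ := (deltaDN a b D).toReal with hδ
  have hδ0 : 0 ≤ δ := ENNReal.toReal_nonneg
  have hφ := phi_pos hyp hs
  set r := √(phi a b D s) with hr
  have hr0 : 0 < r := Real.sqrt_pos.2 hφ
  have hrsq : r ^ 2 = phi a b D s := Real.sq_sqrt hφ.le
  rw [lintegral_eq_lintegral_meas_lt _ (Eventually.of_forall fun x => Real.sqrt_nonneg _)
    (aemeasurable_of_continuousOn (continuousOn_phi hyp).sqrt).restrict,
    ← Ioc_union_Ioi_eq_Ioi hr0.le,
    lintegral_union measurableSet_Ioi (by
      rw [Set.disjoint_left]; intro x hx hx'; exact absurd hx.2 (not_le.2 hx'))]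
  have h1 : ∫⁻ t in Ioc 0 r, (muM a b D).restrict (Ioi s) {x | t < √(phi a b D x)} ≤
      ENNReal.ofReal (δ / r) := by
    calc _ ≤ ∫⁻ _ in Ioc 0 r, ENNReal.ofReal (δ / phi a b D s) := by
          refine lintegral_mono fun t => ?_
          refine le_trans (measure_mono (subset_univ _)) ?_
          rw [Measure.restrict_apply_univ]
          exact muM_Ioi_le hyp hdelta hs
      _ = ENNReal.ofReal (δ / r) := by
          rw [setLIntegral_const, Real.volume_Ioc, ← ENNReal.ofReal_mul (by positivity), ← hrsq]
          congr 1; field_simp; ring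
  have h2 : ∫⁻ t in Ioi r, (muM a b D).restrict (Ioi s) {x | t < √(phi a b D x)} ≤
      ENNReal.ofReal (δ / r) := by
    calc _ ≤ ∫⁻ t in Ioi r, ENNReal.ofReal (δ * t ^ (-2 : ℝ)) := by
          refine setLIntegral_mono' measurableSet_Ioi fun t ht => ?_
          have ht0 : 0 < t := hr0.trans ht
          refine le_trans (Measure.restrict_apply_le _ _) ?_
          have h3 : {x | t < √(phi a b D x)} = {x | t ^ 2 < phi a b D x} := by
            ext x; exact Real.lt_sqrt ht0.le
          rw [h3]
          have h4 := muM_phi_gt_le hyp hdelta hs (t := t ^ 2) (by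
            rw [← hrsq]; exact pow_le_pow_left₀ hr0.le (le_of_lt ht) 2)
          rw [Real.rpow_neg ht0.le, ← div_eq_mul_inv]
          exact_mod_cast h4
      _ = ENNReal.ofReal (∫ t in Ioi r, δ * t ^ (-2 : ℝ)) := by
          rw [ofReal_integral_eq_lintegral_ofReal]
          · exact (integrableOn_Ioi_rpow_of_lt (by norm_num) hr0).const_mul _
          · filter_upwards [ae_restrict_mem measurableSet_Ioi] with t ht
            have ht0 : 0 < t := hr0.trans ht
            simp only [Pi.zero_apply]; positivity
      _ = ENNReal.ofReal (δ / r) := by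
          rw [integral_const_mul, integral_Ioi_rpow_of_lt (by norm_num) hr0]
          norm_num [Real.rpow_neg_one, div_eq_mul_inv]
  refine (add_le_add h1 h2).trans ?_
  rw [← ENNReal.ofReal_add (by positivity) (by positivity)]
  exact ENNReal.ofReal_le_ofReal (by rw [← add_div, two_mul])

lemma integrable_sqrt_phi {a b : ℝ → ℝ} {D : ℝ≥0∞} (hD : 0 < D) (hyp : Hyp a b D)
    (hmu : muM a b D univ ≠ ∞) (hdelta : deltaDN a b D < ∞) :
    Integrable (fun x => √(phi a b D x)) (muM a b D) := by
  obtain ⟨s, hs⟩ := ooI_nonempty hD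
  have hm : AEMeasurable (fun x => √(phi a b D x)) (muM a b D) :=
    aemeasurable_of_continuousOn (continuousOn_phi hyp).sqrt
  rw [← integrableOn_univ, ← Iic_union_Ioi (a := s)]
  refine IntegrableOn.union ?_ ⟨hm.aestronglyMeasurable.restrict, ?_⟩
  · refine Measure.integrableOn_of_bounded (M := √(phi a b D s)) (fun h => hmu (top_le_iff.1 (h ▸
      measure_mono (subset_univ _)))) hm.aestronglyMeasurable ?_
    filter_upwards [ae_restrict_mem measurableSet_Iic] with x hx
    rw [Real.norm_of_nonneg (Real.sqrt_nonneg _)]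
    exact Real.sqrt_le_sqrt (phi_mono hyp hs hx)
  · rw [hasFiniteIntegral_iff_ofReal (Eventually.of_forall fun x => Real.sqrt_nonneg _)]
    exact (lintegral_sqrt_phi_le hyp hdelta hs).trans_lt ENNReal.ofReal_lt_top

lemma setIntegral_sqrt_phi_le {a b : ℝ → ℝ} {D : ℝ≥0∞} (hyp : Hyp a b D)
    (hdelta : deltaDN a b D < ∞) {s : ℝ} (hs : s ∈ ooI D) :
    ∫ x in Ioi s, √(phi a b D x) ∂(muM a b D) ≤
      2 * (deltaDN a b D).toReal / √(phi a b D s) := by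
  rw [integral_eq_lintegral_of_nonneg_ae (Eventually.of_forall fun x => Real.sqrt_nonneg _)
    (aemeasurable_of_continuousOn (continuousOn_phi hyp).sqrt).aestronglyMeasurable.restrict]
  refine ENNReal.toReal_le_of_le_ofReal ?_ (lintegral_sqrt_phi_le hyp hdelta hs)
  have : 0 ≤ (deltaDN a b D).toReal := ENNReal.toReal_nonneg
  positivity

/-- `μ(s, D) √φ(s)` is bounded, from `√φ ≤ 1 + φ`. -/
lemma muM_real_Ioi_le {a b : ℝ → ℝ} {D : ℝ≥0∞} (hyp : Hyp a b D) (hmu : muM a b D univ ≠ ∞)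
    (hdelta : deltaDN a b D < ∞) {s : ℝ} (hs : s ∈ ooI D) :
    (muM a b D).real (Ioi s) ≤
      ((muM a b D).real univ + (deltaDN a b D).toReal) / √(phi a b D s) := by
  have : IsFiniteMeasure (muM a b D) := ⟨hmu.lt_top⟩
  have hφ := phi_pos hyp hs
  have hr0 : 0 < √(phi a b D s) := Real.sqrt_pos.2 hφ
  have h1 : (muM a b D).real (Ioi s) ≤ (muM a b D).real univ := measureReal_mono (subset_univ _)
  have h2 : (muM a b D).real (Ioi s) * phi a b D s ≤ (deltaDN a b D).toReal := by
    rw [← le_div_iff₀ hφ]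
    exact ENNReal.toReal_le_of_le_ofReal (div_nonneg ENNReal.toReal_nonneg hφ.le)
      (muM_Ioi_le hyp hdelta hs)
  have h3 : √(phi a b D s) ≤ 1 + phi a b D s := by
    nlinarith [Real.sq_sqrt hφ.le, sq_nonneg (√(phi a b D s) - 1)]
  have h4 : 0 ≤ (muM a b D).real (Ioi s) := measureReal_nonneg
  rw [le_div_iff₀ hr0]
  nlinarith

/-! ### Tail integrals of centred functions -/

section Tail

variable {a b : ℝ → ℝ} {D : ℝ≥0∞}

lemma muM_real_univ_pos (hD : 0 < D) (hyp : Hyp a b D) (hmu : muM a b D univ ≠ ∞) :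
    0 < (muM a b D univ).toReal := by
  obtain ⟨s, hs⟩ := ooI_nonempty hD
  exact ENNReal.toReal_pos ((muM_Ioi_pos hyp hs).trans_le (measure_mono (subset_univ _))).ne' hmu

lemma piMean_congr {f g : ℝ → ℝ} (h : f =ᵐ[muM a b D] g) : piMean a b D f = piMean a b D g := by
  rw [piMean, piMean, integral_congr_ae h]

lemma tailInt_congr {f g : ℝ → ℝ} (h : f =ᵐ[muM a b D] g) (x : ℝ) :
    tailInt a b D f x = tailInt a b D g x :=
  integral_congr_ae (ae_restrict_of_ae h)

lemma barF_congr {f g : ℝ → ℝ} (h : f =ᵐ[muM a b D] g) :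
    barF a b D f =ᵐ[muM a b D] barF a b D g := by
  filter_upwards [h] with x hx
  simp only [barF, hx, piMean_congr h]

lemma integrable_barF (hmu : muM a b D univ ≠ ∞) {f : ℝ → ℝ} (hf : Integrable f (muM a b D)) :
    Integrable (barF a b D f) (muM a b D) := by
  have : IsFiniteMeasure (muM a b D) := ⟨hmu.lt_top⟩
  exact hf.sub (integrable_const _)

lemma integral_barF (hD : 0 < D) (hyp : Hyp a b D) (hmu : muM a b D univ ≠ ∞) {f : ℝ → ℝ}
    (hf : Integrable f (muM a b D)) : ∫ x, barF a b D f x ∂(muM a b D) = 0 := by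
  have : IsFiniteMeasure (muM a b D) := ⟨hmu.lt_top⟩
  have hM := muM_real_univ_pos hD hyp hmu
  simp only [barF]
  rw [integral_sub hf (integrable_const _), integral_const, smul_eq_mul, piMean, Measure.real,
    mul_div_cancel₀ _ hM.ne', sub_self]

lemma tailInt_eq_neg {k : ℝ → ℝ} (hk : Integrable k (muM a b D))
    (h0 : ∫ x, k x ∂(muM a b D) = 0) (x : ℝ) :
    tailInt a b D k x = -∫ u in Iic x, k u ∂(muM a b D) := by
  have := integral_add_compl (μ := muM a b D) (s := Iic x) measurableSet_Iic hk
  rw [h0, compl_Iic] at this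
  rw [tailInt]; linarith

lemma tailInt_nonpos {k : ℝ → ℝ} (hk : Integrable k (muM a b D))
    (h0 : ∫ x, k x ∂(muM a b D) = 0) (hanti : AntitoneOn k (ooI D)) {x : ℝ} (hx : x ∈ ooI D) :
    tailInt a b D k x ≤ 0 := by
  rcases le_total (k x) 0 with h | h
  · refine setIntegral_nonpos_of_ae_restrict ?_
    filter_upwards [ae_restrict_of_ae (ae_mem_ooI a b D), ae_restrict_mem measurableSet_Ioi]
      with y hy hxy
    exact (hanti hx hy (le_of_lt hxy)).trans h
  · rw [tailInt_eq_neg hk h0, neg_nonpos]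
    refine setIntegral_nonneg_of_ae_restrict ?_
    filter_upwards [ae_restrict_of_ae (ae_mem_ooI a b D), ae_restrict_mem measurableSet_Iic]
      with y hy hxy
    exact h.trans (hanti hy hx hxy)

lemma tailInt_pos (hyp : Hyp a b D) {k : ℝ → ℝ} (hk : Integrable k (muM a b D))
    (h0 : ∫ x, k x ∂(muM a b D) = 0) (hmono : StrictMonoOn k (ooI D)) {x : ℝ} (hx : x ∈ ooI D) :
    0 < tailInt a b D k x := by
  obtain ⟨p, hp, hxp⟩ := exists_gt_ooI hx
  rcases le_or_gt 0 (k x) with h | h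
  · rw [tailInt, setIntegral_pos_iff_support_of_nonneg_ae _ hk.integrableOn]
    · have hsub : Ioo x p ⊆ ooI D := fun y hy => ooI_of_le hp (hx.1.trans hy.1) hy.2.le
      refine (muM_Ioo_pos hyp hxp hsub).trans_le (measure_mono fun y hy => ⟨?_, hy.1⟩)
      exact (h.trans_lt (hmono hx (hsub hy) hy.1)).ne'
    · filter_upwards [ae_restrict_of_ae (ae_mem_ooI a b D), ae_restrict_mem measurableSet_Ioi]
        with y hy hxy
      exact h.trans (hmono hx hy hxy).le
  · rw [tailInt_eq_neg hk h0, ← integral_neg,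
      setIntegral_pos_iff_support_of_nonneg_ae (f := fun u => -k u) _ hk.neg.integrableOn]
    · have hsub : Ioo 0 x ⊆ ooI D := fun y hy => ooI_of_le hx hy.1 hy.2.le
      refine (muM_Ioo_pos hyp hx.1 hsub).trans_le (measure_mono fun y hy => ⟨?_, hy.2.le⟩)
      have := (hmono (hsub hy) hx hy.2).trans h
      exact (neg_pos.2 this).ne'
    · filter_upwards [ae_restrict_of_ae (ae_mem_ooI a b D), ae_restrict_mem measurableSet_Iic]
        with y hy hxy
      have := hmono.monotoneOn hy hx hxy
      simp only [Pi.zero_apply]; linarith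

lemma continuous_tailInt {k : ℝ → ℝ} (hk : Integrable k (muM a b D)) :
    Continuous (tailInt a b D k) := by
  have h : tailInt a b D k = fun x => tailInt a b D k 0 - ∫ u in (0 : ℝ)..x, k u ∂(muM a b D) := by
    funext x
    have := intervalIntegral.integral_interval_add_Ioi (a := 0) (b := x) (μ := muM a b D)
      (f := k) hk.integrableOn hk.integrableOn
    simp only [tailInt]; linarith
  rw [h]
  exact continuous_const.sub (intervalIntegral.continuous_primitive
    (fun _ _ => hk.intervalIntegrable) 0)

end Tail

/-! ### Regularity of the approximating sequence -/

/-- The tail integral `T_n(x) = ∫_x^D f̄ dμ` of the centred `n`-th iterate. -/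
def tailN (a b : ℝ → ℝ) (D : ℝ≥0∞) (n : ℕ) (x : ℝ) : ℝ :=
  tailInt a b D (barF a b D (fseqNN a b D n)) x

/-- The smooth version of the iterates: `√φ`, then the bare double integral. It differs from
`fseqNN` only where `f̄` vanishes, since there the quotient in `opIIsigned` is `0` by the
convention `y / 0 = 0`. -/
def Phi (a b : ℝ → ℝ) (D : ℝ≥0∞) : ℕ → ℝ → ℝ
  | 0 => fun x => √(phi a b D x)
  | n + 1 => fun x => ∫ s in Ioo 0 x, tailN a b D n s ∂(nuM a b D)

/-- The derivative of `Phi` on `(0, D)`. -/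
def dPhi (a b : ℝ → ℝ) (D : ℝ≥0∞) : ℕ → ℝ → ℝ
  | 0 => fun x => Real.exp (-Cf a b x) / (2 * √(phi a b D x))
  | n + 1 => fun x => Real.exp (-Cf a b x) * tailN a b D n x

/-- The properties of the `n`-th iterate that propagate along the recursion. The bound by `√φ`
gives integrability; the finite set is where `fseqNN` may differ from `Phi`. -/
structure Regular (a b : ℝ → ℝ) (D : ℝ≥0∞) (n : ℕ) : Prop where
  hasDerivAt : ∀ x ∈ ooI D, HasDerivAt (Phi a b D n) (dPhi a b D n x) x
  cont : ContinuousOn (dPhi a b D n) (ooI D)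
  pos : ∀ x ∈ ooI D, 0 < dPhi a b D n x
  nonneg : ∀ x ∈ ooI D, 0 ≤ Phi a b D n x
  bound : ∃ K, 0 ≤ K ∧ ∀ x ∈ ooI D, Phi a b D n x ≤ K * √(phi a b D x)
  eqOff : ∃ S : Set ℝ, S.Finite ∧ ∀ x ∈ ooI D, x ∉ S → fseqNN a b D n x = Phi a b D n x

namespace Regular

variable {a b : ℝ → ℝ} {D : ℝ≥0∞} {n : ℕ}

lemma continuousOn (h : Regular a b D n) : ContinuousOn (Phi a b D n) (ooI D) :=
  fun x hx => (h.hasDerivAt x hx).continuousAt.continuousWithinAt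

lemma strictMonoOn (h : Regular a b D n) : StrictMonoOn (Phi a b D n) (ooI D) := by
  refine strictMonoOn_of_deriv_pos (convex_ooI D) h.continuousOn fun x hx => ?_
  rw [(isOpen_ooI D).interior_eq] at hx
  rw [(h.hasDerivAt x hx).deriv]
  exact h.pos x hx

lemma ae_eq (h : Regular a b D n) : fseqNN a b D n =ᵐ[muM a b D] Phi a b D n := by
  obtain ⟨S, hS, hSe⟩ := h.eqOff
  filter_upwards [ae_mem_ooI a b D, measure_eq_zero_iff_ae_notMem.1 (hS.measure_zero (muM a b D))]
    with x hx hxS using hSe x hx hxS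

lemma integrable_Phi (h : Regular a b D n) (hD : 0 < D) (hyp : Hyp a b D)
    (hmu : muM a b D univ ≠ ∞) (hdelta : deltaDN a b D < ∞) :
    Integrable (Phi a b D n) (muM a b D) := by
  obtain ⟨K, -, hKb⟩ := h.bound
  refine ((integrable_sqrt_phi hD hyp hmu hdelta).const_mul K).mono'
    (aemeasurable_of_continuousOn h.continuousOn).aestronglyMeasurable ?_
  filter_upwards [ae_mem_ooI a b D] with x hx
  rw [Real.norm_of_nonneg (h.nonneg x hx)]
  exact hKb x hx

lemma tailN_eq (h : Regular a b D n) (x : ℝ) :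
    tailN a b D n x = tailInt a b D (barF a b D (Phi a b D n)) x :=
  tailInt_congr (barF_congr h.ae_eq) x

lemma continuous_tailN (h : Regular a b D n) (hD : 0 < D) (hyp : Hyp a b D)
    (hmu : muM a b D univ ≠ ∞) (hdelta : deltaDN a b D < ∞) : Continuous (tailN a b D n) :=
  continuous_tailInt (integrable_barF hmu
    ((h.integrable_Phi hD hyp hmu hdelta).congr h.ae_eq.symm))

lemma tailN_pos (h : Regular a b D n) (hD : 0 < D) (hyp : Hyp a b D)
    (hmu : muM a b D univ ≠ ∞) (hdelta : deltaDN a b D < ∞) {x : ℝ} (hx : x ∈ ooI D) :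
    0 < tailN a b D n x := by
  have hi := h.integrable_Phi hD hyp hmu hdelta
  rw [h.tailN_eq]
  refine tailInt_pos hyp (integrable_barF hmu hi) (integral_barF hD hyp hmu hi) ?_ hx
  intro u hu v hv huv
  exact sub_lt_sub_right (h.strictMonoOn hu hv huv) _

lemma tailN_le (h : Regular a b D n) (hD : 0 < D) (hyp : Hyp a b D)
    (hmu : muM a b D univ ≠ ∞) (hdelta : deltaDN a b D < ∞) :
    ∃ K, 0 ≤ K ∧ ∀ x ∈ ooI D, tailN a b D n x ≤ K / √(phi a b D x) := by
  have : IsFiniteMeasure (muM a b D) := ⟨hmu.lt_top⟩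
  obtain ⟨K, hK, hKb⟩ := h.bound
  set δ := (deltaDN a b D).toReal
  have hδ : 0 ≤ δ := ENNReal.toReal_nonneg
  set M := (muM a b D).real univ
  have hM : 0 ≤ M := measureReal_nonneg
  set c := |piMean a b D (Phi a b D n)|
  refine ⟨K * (2 * δ) + c * (M + δ), by positivity, fun x hx => ?_⟩
  have hs := integrable_sqrt_phi hD hyp hmu hdelta
  rw [h.tailN_eq]
  calc tailInt a b D (barF a b D (Phi a b D n)) x
      ≤ ∫ u in Ioi x, (K * √(phi a b D u) + c) ∂(muM a b D) := by
        refine setIntegral_mono_ae_restrict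
          (integrable_barF hmu (h.integrable_Phi hD hyp hmu hdelta)).integrableOn
          ((hs.const_mul K).add (integrable_const c)).integrableOn ?_
        filter_upwards [ae_restrict_of_ae (ae_mem_ooI a b D)] with u hu
        have := hKb u hu
        have := neg_abs_le (piMean a b D (Phi a b D n))
        simp only [barF]; linarith
    _ = K * (∫ u in Ioi x, √(phi a b D u) ∂(muM a b D)) + c * (muM a b D).real (Ioi x) := by
        rw [integral_add (hs.const_mul K).integrableOn (integrable_const c).integrableOn,
          integral_const_mul, setIntegral_const, smul_eq_mul, mul_comm c]
    _ ≤ K * (2 * δ / √(phi a b D x)) + c * ((M + δ) / √(phi a b D x)) := by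
        gcongr
        · exact setIntegral_sqrt_phi_le hyp hdelta hx
        · exact muM_real_Ioi_le hyp hmu hdelta hx
    _ = _ := by ring

end Regular

lemma hasDerivAt_sqrt_phi {a b : ℝ → ℝ} {D : ℝ≥0∞} (hyp : Hyp a b D) {x : ℝ} (hx : x ∈ ooI D) :
    HasDerivAt (Phi a b D 0) (dPhi a b D 0 x) x :=
  (hasDerivAt_phi hyp hx).sqrt (phi_pos hyp hx).ne'

lemma regular_zero {a b : ℝ → ℝ} {D : ℝ≥0∞} (hyp : Hyp a b D) : Regular a b D 0 where
  hasDerivAt _ hx := hasDerivAt_sqrt_phi hyp hx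
  cont := (continuousOn_weight' hyp).div (continuousOn_const.mul (continuousOn_phi hyp).sqrt)
    fun x hx => by have := Real.sqrt_pos.2 (phi_pos hyp hx); positivity
  pos x hx := by
    have := Real.sqrt_pos.2 (phi_pos hyp hx)
    simp only [dPhi]; positivity
  nonneg _ _ := Real.sqrt_nonneg _
  bound := ⟨1, zero_le_one, fun x _ => by simp [Phi]⟩
  eqOff := ⟨∅, finite_empty, fun _ _ _ => rfl⟩

lemma regular_succ {a b : ℝ → ℝ} {D : ℝ≥0∞} (hD : 0 < D) (hyp : Hyp a b D)
    (hmu : muM a b D univ ≠ ∞) (hdelta : deltaDN a b D < ∞) {n : ℕ} (h : Regular a b D n) :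
    Regular a b D (n + 1) := by
  have hT := h.continuous_tailN hD hyp hmu hdelta
  have hTpos : ∀ x ∈ ooI D, 0 < tailN a b D n x := fun x hx => h.tailN_pos hD hyp hmu hdelta hx
  have hd : ∀ x ∈ ooI D, HasDerivAt (Phi a b D (n + 1)) (dPhi a b D (n + 1) x) x :=
    fun x hx => hasDerivAt_nuM_integral hyp hT hx
  have hdpos : ∀ x ∈ ooI D, 0 < dPhi a b D (n + 1) x :=
    fun x hx => mul_pos (Real.exp_pos _) (hTpos x hx)
  have hc : ∀ p ∈ ooI D, ContinuousOn (Phi a b D (n + 1)) (Icc 0 p) :=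
    fun p hp => continuousOn_nuM_integral hyp hT hp
  have h0 : Phi a b D (n + 1) 0 = 0 := by simp [Phi]
  refine ⟨hd, (continuousOn_weight' hyp).mul hT.continuousOn, hdpos, ?_, ?_, ?_⟩
  · intro x hx
    have hm : MonotoneOn (Phi a b D (n + 1)) (Icc 0 x) := by
      refine monotoneOn_of_deriv_nonneg (convex_Icc 0 x) (hc x hx) ?_ ?_ <;>
        rw [interior_Icc]
      · exact fun y hy => (hd y (ooI_of_le hx hy.1 hy.2.le)).differentiableAt.differentiableWithinAt
      · intro y hy
        have hyD := ooI_of_le hx hy.1 hy.2.le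
        rw [(hd y hyD).deriv]
        exact (hdpos y hyD).le
    rw [← h0]
    exact hm ⟨le_rfl, hx.1.le⟩ ⟨hx.1.le, le_rfl⟩ hx.1.le
  · obtain ⟨K, hK, hKb⟩ := h.tailN_le hD hyp hmu hdelta
    refine ⟨2 * K, by positivity, fun x hx => ?_⟩
    -- `2K√φ` and the iterate both vanish at `0`, so it suffices to compare derivatives.
    have hm : MonotoneOn (fun y => 2 * K * Phi a b D 0 y - Phi a b D (n + 1) y) (Icc 0 x) := by
      have hder : ∀ y ∈ Ioo 0 x, HasDerivAt
          (fun y => 2 * K * Phi a b D 0 y - Phi a b D (n + 1) y)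
          (2 * K * dPhi a b D 0 y - dPhi a b D (n + 1) y) y := fun y hy =>
        ((hasDerivAt_sqrt_phi hyp (ooI_of_le hx hy.1 hy.2.le)).const_mul _).sub
          (hd y (ooI_of_le hx hy.1 hy.2.le))
      refine monotoneOn_of_deriv_nonneg (convex_Icc 0 x)
        ((continuousOn_const.mul (continuousOn_phi_Icc hyp hx).sqrt).sub (hc x hx)) ?_ ?_ <;>
        rw [interior_Icc]
      · exact fun y hy => (hder y hy).differentiableAt.differentiableWithinAt
      · intro y hy
        have hyD := ooI_of_le hx hy.1 hy.2.le
        have hr := Real.sqrt_pos.2 (phi_pos hyp hyD)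
        rw [(hder y hy).deriv, sub_nonneg]
        simp only [dPhi]
        calc _ ≤ Real.exp (-Cf a b y) * (K / √(phi a b D y)) := by gcongr; exact hKb y hyD
          _ = _ := by field_simp
    have := hm ⟨le_rfl, hx.1.le⟩ ⟨hx.1.le, le_rfl⟩ hx.1.le
    simp only [h0] at this
    simp only [Phi, phi_zero, Real.sqrt_zero, mul_zero, sub_zero] at this ⊢
    linarith
  · obtain ⟨S, hS, hSe⟩ := h.eqOff
    refine ⟨S ∪ {x ∈ ooI D | Phi a b D n x = piMean a b D (fseqNN a b D n)}, hS.union ?_, ?_⟩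
    · refine Set.Subsingleton.finite fun x hx y hy => ?_
      exact h.strictMonoOn.injOn hx.1 hy.1 (hx.2.trans hy.2.symm)
    · intro x hx hxS
      rw [mem_union, not_or] at hxS
      have hne : barF a b D (fseqNN a b D n) x ≠ 0 := by
        simp only [barF, hSe x hx hxS.1]
        exact sub_ne_zero.2 fun he => hxS.2 ⟨hx, he⟩
      exact mul_div_cancel₀ _ hne

lemma regular {a b : ℝ → ℝ} {D : ℝ≥0∞} (hD : 0 < D) (hyp : Hyp a b D)
    (hmu : muM a b D univ ≠ ∞) (hdelta : deltaDN a b D < ∞) (n : ℕ) : Regular a b D n := by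
  induction n with
  | zero => exact regular_zero hyp
  | succ n ih => exact regular_succ hD hyp hmu hdelta ih

/-! ### The supremum `η` and monotonicity -/

/-- `η` is the supremum of `e^{-C} T_n / Φ_n'`. At the finitely many points where `fseqNN` may
differ from `Phi`, either it is not differentiable and `opIsigned` is `0` there, or it agrees with
`Phi` by continuity; and the value of the continuous positive right-hand side at such a point is
recovered as a limit. -/
lemma etaNN_eq {a b : ℝ → ℝ} {D : ℝ≥0∞} (hD : 0 < D) (hyp : Hyp a b D)
    (hmu : muM a b D univ ≠ ∞) (hdelta : deltaDN a b D < ∞) (n : ℕ) :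
    etaNN a b D n = ⨆ x ∈ ooI D,
      ((Real.exp (-Cf a b x) / dPhi a b D n x * tailN a b D n x : ℝ) : EReal) := by
  have h := regular hD hyp hmu hdelta n
  obtain ⟨S, hS, hSe⟩ := h.eqOff
  have hnear : ∀ x ∈ ooI D, ∀ᶠ y in 𝓝[≠] x, y ∈ ooI D ∧ y ∉ S := fun x hx => by
    have h1 : ∀ᶠ y in 𝓝[≠] x, y ∈ ooI D :=
      nhdsWithin_le_nhds ((isOpen_ooI D).mem_nhds hx)
    have h2 : ∀ᶠ y in 𝓝[≠] x, y ∉ S := by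
      have h3 : (S \ {x})ᶜ ∈ 𝓝 x :=
        (hS.subset sdiff_subset).isClosed.isOpen_compl.mem_nhds (by simp)
      filter_upwards [nhdsWithin_le_nhds h3, self_mem_nhdsWithin] with y hy hyx hyS
      exact hy ⟨hyS, hyx⟩
    exact h1.and h2
  have heq : ∀ x ∈ ooI D, fseqNN a b D n x = Phi a b D n x →
      opIsigned a b D (barF a b D (fseqNN a b D n)) x =
        Real.exp (-Cf a b x) / dPhi a b D n x * tailN a b D n x := fun x hx hxe => by
    have he : fseqNN a b D n =ᶠ[𝓝 x] Phi a b D n := by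
      filter_upwards [eventually_nhdsWithin_iff.1 (hnear x hx)] with y hy
      by_cases hyx : y = x
      · rw [hyx, hxe]
      · exact hSe y (hy hyx).1 (hy hyx).2
    have hd : deriv (barF a b D (fseqNN a b D n)) x = dPhi a b D n x :=
      (((h.hasDerivAt x hx).congr_of_eventuallyEq he).sub_const _).deriv
    rw [opIsigned, hd, tailN]
  apply le_antisymm
  · refine iSup₂_le fun x hx => ?_
    by_cases hxe : fseqNN a b D n x = Phi a b D n x
    · rw [heq x hx hxe]
      exact le_iSup₂ (f := fun x (_ : x ∈ ooI D) =>
        ((Real.exp (-Cf a b x) / dPhi a b D n x * tailN a b D n x : ℝ) : EReal)) x hx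
    · have hnd : ¬ DifferentiableAt ℝ (barF a b D (fseqNN a b D n)) x := by
        intro hdiff
        have hc : ContinuousAt (fseqNN a b D n) x := by
          have := hdiff.continuousAt.add (continuousAt_const (y := piMean a b D (fseqNN a b D n)))
          refine this.congr (Eventually.of_forall fun y => ?_)
          simp [barF]
        have h1 : Tendsto (fseqNN a b D n) (𝓝[≠] x) (𝓝 (Phi a b D n x)) := by
          refine ((h.hasDerivAt x hx).continuousAt.tendsto.mono_left nhdsWithin_le_nhds).congr' ?_
          filter_upwards [hnear x hx] with y hy using (hSe y hy.1 hy.2).symm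
        exact hxe (tendsto_nhds_unique (hc.tendsto.mono_left nhdsWithin_le_nhds) h1)
      refine le_trans ?_ (le_iSup₂ (f := fun x (_ : x ∈ ooI D) =>
        ((Real.exp (-Cf a b x) / dPhi a b D n x * tailN a b D n x : ℝ) : EReal)) x hx)
      rw [opIsigned, deriv_zero_of_not_differentiableAt hnd, _root_.div_zero, zero_mul]
      have := h.pos x hx
      have := h.tailN_pos hD hyp hmu hdelta hx
      exact_mod_cast (by positivity)
  · refine iSup₂_le fun x hx => ?_
    have hcont : ContinuousAt
        (fun y => Real.exp (-Cf a b y) / dPhi a b D n y * tailN a b D n y) x :=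
      (((continuousOn_weight' hyp).div h.cont fun y hy => (h.pos y hy).ne').continuousAt
        ((isOpen_ooI D).mem_nhds hx)).mul (h.continuous_tailN hD hyp hmu hdelta).continuousAt
    have hlim := (continuous_coe_real_ereal.tendsto _).comp
      (hcont.tendsto.mono_left (nhdsWithin_le_nhds (s := {x}ᶜ)))
    refine le_of_tendsto hlim ?_
    filter_upwards [hnear x hx] with y hy
    rw [Function.comp_apply, ← heq y hy.1 (hSe y hy.1 hy.2)]
    exact le_iSup₂ (f := fun x (_ : x ∈ ooI D) =>
      ((opIsigned a b D (barF a b D (fseqNN a b D n)) x : ℝ) : EReal)) y hy.1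

lemma etaNN_succ_eq {a b : ℝ → ℝ} {D : ℝ≥0∞} (hD : 0 < D) (hyp : Hyp a b D)
    (hmu : muM a b D univ ≠ ∞) (hdelta : deltaDN a b D < ∞) (n : ℕ) :
    etaNN a b D (n + 1) = ⨆ x ∈ ooI D,
      ((tailN a b D (n + 1) x / tailN a b D n x : ℝ) : EReal) := by
  rw [etaNN_eq hD hyp hmu hdelta]
  refine iSup_congr fun x => iSup_congr fun hx => ?_
  have := (regular hD hyp hmu hdelta n).tailN_pos hD hyp hmu hdelta hx
  congr 1
  simp only [dPhi]
  field_simp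

/-- If `e^{-C} T_n ≤ η Φ_n'`, then `Φ_{n+1} - η Φ_n` is decreasing, so its centred tail integrals
`T_{n+1} - η T_n` are nonpositive. -/
lemma tailN_succ_le {a b : ℝ → ℝ} {D : ℝ≥0∞} (hD : 0 < D) (hyp : Hyp a b D)
    (hmu : muM a b D univ ≠ ∞) (hdelta : deltaDN a b D < ∞) (n : ℕ) {η : ℝ}
    (hη : ∀ x ∈ ooI D, dPhi a b D (n + 1) x ≤ η * dPhi a b D n x) {x : ℝ} (hx : x ∈ ooI D) :
    tailN a b D (n + 1) x ≤ η * tailN a b D n x := by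
  have hn := regular hD hyp hmu hdelta n
  have hn' := regular hD hyp hmu hdelta (n + 1)
  have hi := hn.integrable_Phi hD hyp hmu hdelta
  have hi' := hn'.integrable_Phi hD hyp hmu hdelta
  have hb := integrable_barF hmu hi
  have hb' := integrable_barF hmu hi'
  have hder : ∀ y ∈ ooI D, HasDerivAt
      (fun y => barF a b D (Phi a b D (n + 1)) y - η * barF a b D (Phi a b D n) y)
      (dPhi a b D (n + 1) y - η * dPhi a b D n y) y := fun y hy =>
    ((hn'.hasDerivAt y hy).sub_const _).sub (((hn.hasDerivAt y hy).sub_const _).const_mul η)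
  have hanti : AntitoneOn
      (fun y => barF a b D (Phi a b D (n + 1)) y - η * barF a b D (Phi a b D n) y) (ooI D) := by
    refine antitoneOn_of_deriv_nonpos (convex_ooI D)
      (fun y hy => (hder y hy).continuousAt.continuousWithinAt) ?_ ?_ <;>
      rw [(isOpen_ooI D).interior_eq]
    · exact fun y hy => (hder y hy).differentiableAt.differentiableWithinAt
    · intro y hy
      rw [(hder y hy).deriv]
      linarith [hη y hy]
  have h0 : ∫ y, (barF a b D (Phi a b D (n + 1)) y - η * barF a b D (Phi a b D n) y)
      ∂(muM a b D) = 0 := by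
    rw [integral_sub hb' (hb.const_mul η), integral_const_mul, integral_barF hD hyp hmu hi,
      integral_barF hD hyp hmu hi']
    simp
  have key := tailInt_nonpos (hb'.sub (hb.const_mul η)) h0 hanti hx
  rw [tailInt] at key
  simp only [Pi.sub_apply] at key
  rw [integral_sub hb'.integrableOn (hb.const_mul η).integrableOn, integral_const_mul] at key
  rw [hn.tailN_eq, hn'.tailN_eq, tailInt, tailInt]
  linarith

lemma etaNN_succ_le {a b : ℝ → ℝ} {D : ℝ≥0∞} (hD : 0 < D) (hyp : Hyp a b D)
    (hmu : muM a b D univ ≠ ∞) (hdelta : deltaDN a b D < ∞) (n : ℕ) :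
    etaNN a b D (n + 1) ≤ etaNN a b D n := by
  have hn := regular hD hyp hmu hdelta n
  have hle : ∀ x ∈ ooI D,
      ((Real.exp (-Cf a b x) / dPhi a b D n x * tailN a b D n x : ℝ) : EReal) ≤ etaNN a b D n := by
    intro x hx
    rw [etaNN_eq hD hyp hmu hdelta]
    exact le_iSup₂ (f := fun x (_ : x ∈ ooI D) =>
      ((Real.exp (-Cf a b x) / dPhi a b D n x * tailN a b D n x : ℝ) : EReal)) x hx
  rw [etaNN_succ_eq hD hyp hmu hdelta]
  refine iSup₂_le fun x hx => ?_
  induction hη : etaNN a b D n with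
  | bot => exact absurd (hle x hx) (by rw [hη, not_le]; exact EReal.bot_lt_coe _)
  | top => exact le_top
  | coe η =>
    rw [EReal.coe_le_coe_iff, div_le_iff₀ (hn.tailN_pos hD hyp hmu hdelta hx)]
    refine tailN_succ_le hD hyp hmu hdelta n (fun y hy => ?_) hx
    have h1 := hle y hy
    rw [hη, EReal.coe_le_coe_iff, div_mul_eq_mul_div, div_le_iff₀ (hn.pos y hy)] at h1
    exact h1

/-- Proposition 5.1: for `n ≥ 2`, `ηₙ` admits the ratio representation
`ηₙ = sup_x (∫_x^D f̄ₙ dμ)/(∫_x^D f̄_{n-1} dμ)` and the sequence `(ηₙ)` is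
non-increasing. -/
theorem nn_eta_monotone
    (a b : ℝ → ℝ) (D : ℝ≥0∞) (hD : 0 < D) (hyp : Hyp a b D)
    (hmu : muM a b D Set.univ ≠ ∞) (hdelta : deltaDN a b D < ∞) :
    (∀ n : ℕ, etaNN a b D (n + 1) =
      ⨆ x ∈ ooI D,
        ((tailInt a b D (barF a b D (fseqNN a b D (n + 1))) x /
            tailInt a b D (barF a b D (fseqNN a b D n)) x : ℝ) : EReal)) ∧
    ∀ n : ℕ, etaNN a b D (n + 1) ≤ etaNN a b D n := by
  exact ⟨fun n => etaNN_succ_eq hD hyp hmu hdelta n, fun n => etaNN_succ_le hD hyp hmu hdelta n⟩
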